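/- Under the KKT setup for a single storage unit at a single time period, if g_ch ≥ 0, g_dc ≥ 0, g_ch + g_dc > 0, and λ_p ≥ 0 (the Relaxation conditions in [15], Condition C6, adapted to ACOPF), then p_ch · p_dc = 0, i.e., no simultaneous charging and discharging occurs. -/

import Mathlib

/-!
Charging one extra unit of power while discharging `η_ch * η_dc` extra units leaves the stored
energy unchanged, so in the corresponding combination of the two stationarity equations the
multiplier `Γ` cancels. If both powers are positive, the multipliers of their lower bounds vanish,
and every remaining multiplier enters this combination with a nonnegative sign: the marginal cost
of the energy-neutral round trip cannot be positive. Under Condition C6 it is positive, being the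
convex combination of `g_ch + lam_p ≥ 0` and `g_ch + g_dc > 0` with weights `1 - η_ch * η_dc` and
`η_ch * η_dc`.
-/

section RoundTrip

variable {𝕜 : Type*} [Field 𝕜]

/-- The marginal cost of a round trip of efficiency `κ`: charge one extra unit of power, discharge
`κ` extra units, and buy the difference at the price `lam_p`, the multiplier of the power balance.
Here `g_ch` and `g_dc` are the marginal costs of charging and discharging. -/
def roundTripCost (κ g_ch g_dc lam_p : 𝕜) : 𝕜 :=
  (g_ch + lam_p) + κ * (g_dc - lam_p)

theorem roundTripCost_eq_convex_combination (κ g_ch g_dc lam_p : 𝕜) :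
    roundTripCost κ g_ch g_dc lam_p = (1 - κ) * (g_ch + lam_p) + κ * (g_ch + g_dc) := by
  unfold roundTripCost
  ring

theorem roundTripCost_add_eq_zero_of_stationary {η_ch η_dc g_ch g_dc lam_p r_ch r_dc E : 𝕜}
    (hη_dc : η_dc ≠ 0)
    (hstat_ch : g_ch + lam_p + r_ch + η_ch * E = 0)
    (hstat_dc : g_dc - lam_p + r_dc - E / η_dc = 0) :
    roundTripCost (η_ch * η_dc) g_ch g_dc lam_p + (r_ch + η_ch * η_dc * r_dc) = 0 := by
  have cancel : η_dc * (E / η_dc) = E := mul_div_cancel₀ E hη_dc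
  unfold roundTripCost
  linear_combination hstat_ch + η_ch * η_dc * hstat_dc + η_ch * cancel

variable [LinearOrder 𝕜] [IsStrictOrderedRing 𝕜]

theorem roundTripCost_pos {κ g_ch g_dc lam_p : 𝕜} (hκ0 : 0 < κ) (hκ1 : κ ≤ 1)
    (hbuy : 0 ≤ g_ch + lam_p) (hcost : 0 < g_ch + g_dc) :
    0 < roundTripCost κ g_ch g_dc lam_p := by
  rw [roundTripCost_eq_convex_combination]
  exact add_pos_of_nonneg_of_pos (mul_nonneg (sub_nonneg.mpr hκ1) hbuy) (mul_pos hκ0 hcost)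

theorem roundTripCost_nonpos_of_stationary {η_ch η_dc g_ch g_dc lam_p r_ch r_dc E : 𝕜}
    (hη_ch : 0 ≤ η_ch) (hη_dc : 0 < η_dc) (hr_ch : 0 ≤ r_ch) (hr_dc : 0 ≤ r_dc)
    (hstat_ch : g_ch + lam_p + r_ch + η_ch * E = 0)
    (hstat_dc : g_dc - lam_p + r_dc - E / η_dc = 0) :
    roundTripCost (η_ch * η_dc) g_ch g_dc lam_p ≤ 0 := by
  have balance := roundTripCost_add_eq_zero_of_stationary hη_dc.ne' hstat_ch hstat_dc
  have hr : 0 ≤ r_ch + η_ch * η_dc * r_dc := by positivity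
  linarith

theorem condition_C6_exact_relaxation_general
    {η_ch η_dc g_ch g_dc Δt Pch Pdc p_ch p_dc Γ lam_p lam_ch1 lam_ch2 lam_dc1 lam_dc2
      lam_S1 lam_S2 lam_relax : 𝕜}
    (hη_ch : 0 ≤ η_ch) (hη_dc : 0 < η_dc) (hPch : 0 < Pch) (hPdc : 0 < Pdc)
    (hpch : 0 ≤ p_ch) (hpdc : 0 ≤ p_dc) (hch2 : 0 ≤ lam_ch2) (hdc2 : 0 ≤ lam_dc2)
    (hS1 : 0 ≤ lam_S1) (hS2 : 0 ≤ lam_S2) (hrelax : 0 ≤ lam_relax)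
    (hcs1 : lam_ch1 * p_ch = 0) (hcs2 : lam_dc1 * p_dc = 0)
    (hstat1 : g_ch + lam_p - lam_ch1 + lam_ch2 + lam_relax / Pch + 2 * lam_S2 * p_ch
      + η_ch * Γ * Δt = 0)
    (hstat2 : g_dc - lam_p - lam_dc1 + lam_dc2 + lam_relax / Pdc + 2 * lam_S1 * p_dc
      - Γ * Δt / η_dc = 0)
    (hcost : 0 < roundTripCost (η_ch * η_dc) g_ch g_dc lam_p) :
    p_ch * p_dc = 0 := by
  by_contra hsimultaneous
  obtain ⟨hpch_ne, hpdc_ne⟩ := mul_ne_zero_iff.mp hsimultaneous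
  have hch1 : lam_ch1 = 0 := (mul_eq_zero.mp hcs1).resolve_right hpch_ne
  have hdc1 : lam_dc1 = 0 := (mul_eq_zero.mp hcs2).resolve_right hpdc_ne
  have hr_ch : 0 ≤ lam_ch2 + lam_relax / Pch + 2 * lam_S2 * p_ch := by positivity
  have hr_dc : 0 ≤ lam_dc2 + lam_relax / Pdc + 2 * lam_S1 * p_dc := by positivity
  refine hcost.not_ge
    (roundTripCost_nonpos_of_stationary (E := Γ * Δt) hη_ch hη_dc hr_ch hr_dc ?_ ?_)
  · linear_combination hstat1 + hch1
  · linear_combination hstat2 + hdc1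

end RoundTrip

theorem condition_C6_exact_relaxation
    (η_ch η_dc g_ch g_dc Δt Pch Pdc p_ch p_dc Γ lam_p lam_ch1 lam_ch2 lam_dc1 lam_dc2 lam_S1 lam_S2 lam_relax : ℝ)
    (hηch0 : 0 < η_ch) (hηch1 : η_ch < 1) (hηdc0 : 0 < η_dc) (hηdc1 : η_dc < 1)
    (hΔt : 0 < Δt) (hPch : 0 < Pch) (hPdc : 0 < Pdc)
    (hpch : 0 ≤ p_ch) (hpdc : 0 ≤ p_dc)
    (hch1 : 0 ≤ lam_ch1) (hch2 : 0 ≤ lam_ch2) (hdc1 : 0 ≤ lam_dc1) (hdc2 : 0 ≤ lam_dc2)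
    (hS1 : 0 ≤ lam_S1) (hS2 : 0 ≤ lam_S2) (hrelax : 0 ≤ lam_relax)
    (hcs1 : lam_ch1 * p_ch = 0) (hcs2 : lam_dc1 * p_dc = 0)
    (hstat1 : g_ch + lam_p - lam_ch1 + lam_ch2 + lam_relax / Pch + 2 * lam_S2 * p_ch + η_ch * Γ * Δt = 0)
    (hstat2 : g_dc - lam_p - lam_dc1 + lam_dc2 + lam_relax / Pdc + 2 * lam_S1 * p_dc - Γ * Δt / η_dc = 0)
    (hC6_1a : g_ch ≥ 0) (hC6_1b : g_dc ≥ 0) (hC6_1c : g_ch + g_dc > 0) (hC6_2 : lam_p ≥ 0) :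
    p_ch * p_dc = 0 := by
  have hcost := roundTripCost_pos (mul_pos hηch0 hηdc0) (mul_le_one₀ hηch1.le hηdc0.le hηdc1.le)
    (add_nonneg hC6_1a hC6_2) hC6_1c
  exact condition_C6_exact_relaxation_general hηch0.le hηdc0 hPch hPdc hpch hpdc hch2 hdc2 hS1 hS2
    hrelax hcs1 hcs2 hstat1 hstat2 hcost
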